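/- arXiv:2210.14459 — 7 statements merged into one kernel-verified Lean document; each statement's English description precedes it below -/
import Mathlib

section
/- Suppose a PI sequence (h^i)_{i≥0} exists (recursive feasibility), the detectability assumption holds, and the initial stabilizing bound V⁰(x) ≤ ᾱ_V(σ(x)) holds for all x with ᾱ_V of class K∞. Then there exists a class-KL function β, independent of i, such that for every iteration i ≥ 0, every initial state x ∈ ℝ^n and every time k ≥ 0, σ(φ(k,x,h^i)) ≤ β(σ(x), k). -/
/-! Minimizing `ℓ + Vⁱ ∘ f` makes `Vⁱ` decrease by at least the stage cost along the closed loop of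
`h^{i+1}`, so `V^{i+1} ≤ Vⁱ ≤ ⋯ ≤ V⁰ ≤ ᾱ_V ∘ σ` (`Jcost_le_of_decrease`): the bound on the cost is
independent of the iteration. It remains to treat the family of all closed-loop trajectories, indexed
by iteration and initial state, using only this bound and detectability.

Along such a trajectory every stage cost is at most `ᾱ_V(σ(x))`. The storage `W` can then increase
only where `σ` is small, which bounds `W` and hence `σ` uniformly, with a bound that goes to zero with
`σ(x)` (`trajectory_bound`). The total cost being finite, `W` would become negative if `σ` stayed
above a level `δ` for too long, so `σ` goes below `δ` within a time depending only on `δ` and a bound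
on `σ(x)` (`trajectory_visit`); stability, applied from that time on, gives uniform attractivity.

Finally (`exists_classKL_of_uniform`), uniform stability and attractivity say that the worst value of
`σ` after time `k` from `σ(x) ≤ s` is finite, nondecreasing in `s`, nonincreasing in `k`, and goes to
zero as `s → 0` or `k → ∞`. Its average over `[s, 2s]` dominates it, keeps these properties and is
continuous in `s`. -/

open scoped NNReal ENNReal Topology

noncomputable section

/-- A class-K∞ function on `ℝ≥0 ≃ [0,∞)`: continuous, strictly increasing,
zero at zero, and unbounded. -/
def ClassKInf (α : ℝ≥0 → ℝ≥0) : Prop :=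
  Continuous α ∧ StrictMono α ∧ α 0 = 0 ∧ ∀ M : ℝ≥0, ∃ s : ℝ≥0, M ≤ α s

/-- A class-KL function on `[0,∞) × [0,∞)`. -/
def ClassKL (β : ℝ≥0 → ℝ≥0 → ℝ≥0) : Prop :=
  (∀ t, Continuous fun s => β s t) ∧ (∀ t, Monotone fun s => β s t) ∧
    (∀ t, β 0 t = 0) ∧ (∀ s, Antitone fun t => β s t) ∧
    (∀ s, Filter.Tendsto (fun t => β s t) Filter.atTop (nhds 0))

variable {n m : ℕ}

/-- Closed-loop solution of `x(k+1) = f(x(k), h(x(k)))` from `x`. -/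
def phiCL (f : (Fin n → ℝ) → (Fin m → ℝ) → Fin n → ℝ)
    (h : (Fin n → ℝ) → Fin m → ℝ) (x : Fin n → ℝ) : ℕ → Fin n → ℝ
  | 0 => x
  | k + 1 => f (phiCL f h x k) (h (phiCL f h x k))

/-- Infinite-horizon closed-loop cost `J(x,h)`, valued in `[0,∞]`. -/
def Jcost (f : (Fin n → ℝ) → (Fin m → ℝ) → Fin n → ℝ)
    (ℓ : (Fin n → ℝ) → (Fin m → ℝ) → ℝ≥0)
    (x : Fin n → ℝ) (h : (Fin n → ℝ) → Fin m → ℝ) : ℝ≥0∞ :=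
  ∑' k : ℕ, (ℓ (phiCL f h x k) (h (phiCL f h x k)) : ℝ≥0∞)

/-! ### Continuous majorants of monotone gains -/

/-- The average of `g` over `[s, 2s]`, written as `∫₁² g(sτ) dτ` so that it also makes sense at
`s = 0`. -/
def avgGain (g : ℝ≥0 → ℝ≥0) (s : ℝ≥0) : ℝ≥0 :=
  (∫ τ in (1 : ℝ)..2, (g (s * τ.toNNReal) : ℝ)).toNNReal

lemma monotone_coe_gain {g : ℝ≥0 → ℝ≥0} (hg : Monotone g) (s : ℝ≥0) :
    Monotone fun τ : ℝ => (g (s * τ.toNNReal) : ℝ) := fun _ _ hab =>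
  NNReal.coe_le_coe.2 (hg (mul_le_mul_right (Real.toNNReal_le_toNNReal hab) s))

lemma intervalIntegrable_gain {g : ℝ≥0 → ℝ≥0} (hg : Monotone g) (s : ℝ≥0) (a b : ℝ) :
    IntervalIntegrable (fun τ : ℝ => (g (s * τ.toNNReal) : ℝ)) MeasureTheory.volume a b :=
  (monotone_coe_gain hg s).intervalIntegrable

lemma coe_avgGain (g : ℝ≥0 → ℝ≥0) (s : ℝ≥0) :
    (avgGain g s : ℝ) = ∫ τ in (1 : ℝ)..2, (g (s * τ.toNNReal) : ℝ) := by
  refine Real.coe_toNNReal _ ?_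
  exact intervalIntegral.integral_nonneg (by norm_num) fun _ _ => NNReal.coe_nonneg _

lemma avgGain_mono {g g' : ℝ≥0 → ℝ≥0} (hg : Monotone g) (hg' : Monotone g') {s s' : ℝ≥0}
    (h : ∀ c, g (s * c) ≤ g' (s' * c)) : avgGain g s ≤ avgGain g' s' := by
  rw [← NNReal.coe_le_coe, coe_avgGain, coe_avgGain]
  exact intervalIntegral.integral_mono_on (by norm_num) (intervalIntegrable_gain hg s 1 2)
    (intervalIntegrable_gain hg' s' 1 2) fun τ _ => NNReal.coe_le_coe.2 (h _)

lemma le_avgGain {g : ℝ≥0 → ℝ≥0} (hg : Monotone g) (s : ℝ≥0) : g s ≤ avgGain g s := by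
  rw [← NNReal.coe_le_coe, coe_avgGain]
  have h : ∫ _ in (1 : ℝ)..2, (g s : ℝ) ≤ ∫ τ in (1 : ℝ)..2, (g (s * τ.toNNReal) : ℝ) := by
    refine intervalIntegral.integral_mono_on (by norm_num) (by simp)
      (intervalIntegrable_gain hg s 1 2) fun τ hτ => NNReal.coe_le_coe.2 (hg ?_)
    exact le_mul_of_one_le_right' (by simpa using hτ.1)
  simpa [show (2 : ℝ) - 1 = 1 by norm_num] using h

lemma avgGain_le {g : ℝ≥0 → ℝ≥0} (hg : Monotone g) (s : ℝ≥0) : avgGain g s ≤ g (s * 2) := by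
  rw [← NNReal.coe_le_coe, coe_avgGain]
  have h : ∫ τ in (1 : ℝ)..2, (g (s * τ.toNNReal) : ℝ) ≤ ∫ _ in (1 : ℝ)..2, (g (s * 2) : ℝ) := by
    refine intervalIntegral.integral_mono_on (by norm_num)
      (intervalIntegrable_gain hg s 1 2) (by simp) fun τ hτ => NNReal.coe_le_coe.2 (hg ?_)
    refine mul_le_mul_right ?_ s
    exact Real.toNNReal_le_iff_le_coe.2 (by simpa using hτ.2)
  simpa [show (2 : ℝ) - 1 = 1 by norm_num] using h

lemma continuous_avgGain {g : ℝ≥0 → ℝ≥0} (hg : Monotone g)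
    (hg0 : ∀ ε > 0, ∃ δ > 0, g δ ≤ ε) : Continuous (avgGain g) := by
  rw [continuous_iff_continuousAt]
  intro s
  rcases eq_zero_or_pos s with rfl | hs
  · have h0 : avgGain g 0 = 0 := by
      refine le_antisymm (le_of_forall_pos_le_add fun ε hε => ?_) bot_le
      obtain ⟨δ, hδ, h⟩ := hg0 ε hε
      calc avgGain g 0 ≤ g (0 * 2) := avgGain_le hg 0
        _ ≤ g δ := hg (by simp)
        _ ≤ 0 + ε := by simpa using h
    rw [ContinuousAt, h0]
    refine tendsto_order.2 ⟨fun a ha => absurd ha not_lt_zero, fun ε hε => ?_⟩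
    obtain ⟨ε', hε', hlt⟩ := exists_between hε
    obtain ⟨δ, hδ, h⟩ := hg0 ε' hε'
    filter_upwards [gt_mem_nhds (show (0 : ℝ≥0) < δ / 2 by positivity)] with x hx
    refine ((avgGain_le hg x).trans ((hg ?_).trans h)).trans_lt hlt
    calc x * 2 ≤ δ / 2 * 2 := mul_le_mul_left hx.le 2
      _ = δ := by simp
  · -- away from zero, the average is `s⁻¹ (P (2s) - P s)` with `P` a primitive of `g`
    let G : ℝ → ℝ := fun y => (g y.toNNReal : ℝ)
    have hGi : ∀ a b, IntervalIntegrable G MeasureTheory.volume a b := fun _ _ => by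
      simpa [G] using intervalIntegrable_gain hg 1 _ _
    have hP : Continuous fun b => ∫ y in (0 : ℝ)..b, G y :=
      intervalIntegral.continuous_primitive hGi 0
    have heq : ∀ x : ℝ≥0, 0 < x → avgGain g x =
        ((x : ℝ)⁻¹ * ((∫ y in (0 : ℝ)..(x * 2), G y) - ∫ y in (0 : ℝ)..x, G y)).toNNReal := by
      intro x hx
      have hx' : (x : ℝ) ≠ 0 := (NNReal.coe_pos.2 hx).ne'
      have h1 := intervalIntegral.integral_comp_mul_left (a := 1) (b := 2) G hx'
      rw [mul_one] at h1
      rw [intervalIntegral.integral_interval_sub_left (hGi _ _) (hGi _ _), ← smul_eq_mul, ← h1,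
        avgGain]
      congr 2
      funext τ
      simp only [G]
      rw [Real.toNNReal_mul (NNReal.coe_nonneg x), Real.toNNReal_coe]
    have hc : ContinuousAt (fun x : ℝ≥0 =>
        ((x : ℝ)⁻¹ * ((∫ y in (0 : ℝ)..(x * 2), G y) - ∫ y in (0 : ℝ)..x, G y)).toNNReal) s := by
      refine continuous_real_toNNReal.continuousAt.comp ?_
      refine ContinuousAt.mul ?_ (Continuous.continuousAt ?_)
      · exact NNReal.continuous_coe.continuousAt.inv₀ (NNReal.coe_pos.2 hs).ne'
      · exact (hP.comp (NNReal.continuous_coe.mul continuous_const)).sub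
          (hP.comp NNReal.continuous_coe)
    refine hc.congr ?_
    filter_upwards [lt_mem_nhds hs] with x hx using (heq x hx).symm

/-! ### From uniform stability and attractivity to a class-KL bound -/

/-- A family of trajectories that is uniformly bounded, uniformly stable and uniformly attractive
admits a class-KL bound: the worst value after time `k` from initial values at most `s` is
monotone in both arguments, and averaging over `[s, 2s]` makes it continuous in `s`. -/
lemma exists_classKL_of_uniform {ι : Type*} (a : ι → ℕ → ℝ≥0)
    (hb : ∀ r, ∃ R, ∀ i, a i 0 ≤ r → ∀ k, a i k ≤ R)
    (hs : ∀ ε > 0, ∃ δ > 0, ∀ i, a i 0 ≤ δ → ∀ k, a i k ≤ ε)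
    (ha : ∀ r, ∀ ε > 0, ∃ N, ∀ i, a i 0 ≤ r → ∀ k, N ≤ k → a i k ≤ ε) :
    ∃ β : ℝ≥0 → ℝ≥0 → ℝ≥0, ClassKL β ∧ ∀ i (k : ℕ), a i k ≤ β (a i 0) (k : ℝ≥0) := by
  let S : ℕ → ℝ≥0 → Set ℝ≥0 := fun k r => {y | ∃ i j, a i 0 ≤ r ∧ k ≤ j ∧ a i j = y}
  let M : ℕ → ℝ≥0 → ℝ≥0 := fun k r => sSup (S k r)
  have hbdd : ∀ k r, BddAbove (S k r) := by
    intro k r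
    obtain ⟨R, hR⟩ := hb r
    refine ⟨R, ?_⟩
    rintro _ ⟨i, j, hi, -, rfl⟩
    exact hR i hi j
  have hMle : ∀ k r c, (∀ i, a i 0 ≤ r → ∀ j, k ≤ j → a i j ≤ c) → M k r ≤ c := by
    intro k r c h
    refine csSup_le' ?_
    rintro _ ⟨i, j, hi, hj, rfl⟩
    exact h i hi j hj
  have hleM : ∀ k r i j, a i 0 ≤ r → k ≤ j → a i j ≤ M k r := fun k r i j hi hj =>
    le_csSup (hbdd k r) ⟨i, j, hi, hj, rfl⟩
  have hmono : ∀ k, Monotone (M k) := fun k r r' h =>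
    hMle _ _ _ fun i hi j hj => hleM _ _ i j (hi.trans h) hj
  have hanti : ∀ r k k', k ≤ k' → M k' r ≤ M k r := fun r k k' h =>
    hMle _ _ _ fun i hi j hj => hleM _ _ i j hi (h.trans hj)
  have hsmall : ∀ k, ∀ ε > 0, ∃ δ > 0, M k δ ≤ ε := by
    intro k ε hε
    obtain ⟨δ, hδ, h⟩ := hs ε hε
    exact ⟨δ, hδ, hMle _ _ _ fun i hi j _ => h i hi j⟩
  refine ⟨fun s t => avgGain (M ⌊t⌋₊) s, ⟨fun t => ?_, fun t => ?_, fun t => ?_, fun s => ?_,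
    fun s => ?_⟩, fun i k => ?_⟩
  · exact continuous_avgGain (hmono _) (hsmall _)
  · exact fun s s' h => avgGain_mono (hmono _) (hmono _) fun c => hmono _ (mul_le_mul_left h c)
  · refine le_antisymm (le_of_forall_pos_le_add fun ε hε => ?_) bot_le
    obtain ⟨δ, hδ, h⟩ := hsmall ⌊t⌋₊ ε hε
    calc avgGain (M ⌊t⌋₊) 0 ≤ M ⌊t⌋₊ (0 * 2) := avgGain_le (hmono _) 0
      _ ≤ M ⌊t⌋₊ δ := hmono _ (by simp)
      _ ≤ 0 + ε := by simpa using h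
  · exact fun t t' h => avgGain_mono (hmono _) (hmono _) fun c =>
      hanti _ _ _ (Nat.floor_mono h)
  · refine tendsto_order.2 ⟨fun b hb => absurd hb not_lt_zero, fun ε hε => ?_⟩
    obtain ⟨ε', hε', hlt⟩ := exists_between hε
    obtain ⟨N, hN⟩ := ha (s * 2) ε' hε'
    filter_upwards [Filter.eventually_ge_atTop (N : ℝ≥0)] with t ht
    refine ((avgGain_le (hmono _) s).trans (hMle _ _ _ fun i hi j hj => ?_)).trans_lt hlt
    exact hN i hi j ((Nat.le_floor ht).trans hj)
  · simp only [Nat.floor_natCast]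
    exact (hleM k _ i k le_rfl le_rfl).trans (le_avgGain (hmono _) _)

/-! ### Detectable trajectories with finite cost -/

/-- Under dissipation `w (k+1) + αW (s k) ≤ w k + χ (l k)` with inputs `χ (l k) ≤ X`, storage grows
only while `αW (s k) ≤ X`, hence while `s k ≤ p`; so it never exceeds `B`. -/
lemma trajectory_bound {alphaW chiW alphaWbar : ℝ≥0 → ℝ≥0} (halphaW : StrictMono alphaW)
    (hbarmono : Monotone alphaWbar) {s l w : ℕ → ℝ≥0} (hw : ∀ k, w k ≤ alphaWbar (s k))
    (hdet : ∀ k, w (k + 1) + alphaW (s k) ≤ w k + chiW (l k))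
    {X p B R : ℝ≥0} (hX : ∀ k, chiW (l k) ≤ X) (hp : X ≤ alphaW p) (hB0 : alphaWbar (s 0) ≤ B)
    (hB : alphaWbar p + X ≤ B) (hR : B + X ≤ alphaW R) (k : ℕ) : s k ≤ R := by
  have hwB : ∀ k, w k ≤ B := by
    intro k
    induction k with
    | zero => exact (hw 0).trans hB0
    | succ k ih =>
      rcases le_total (s k) p with h | h
      · calc w (k + 1) ≤ w (k + 1) + alphaW (s k) := le_self_add
          _ ≤ w k + chiW (l k) := hdet k
          _ ≤ alphaWbar p + X := add_le_add ((hw k).trans (hbarmono h)) (hX k)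
          _ ≤ B := hB
      · have h1 : X ≤ alphaW (s k) := hp.trans (halphaW.monotone h)
        have h2 : w (k + 1) + alphaW (s k) ≤ B + alphaW (s k) :=
          (hdet k).trans (add_le_add ih ((hX k).trans h1))
        exact le_of_add_le_add_right h2
  refine halphaW.le_iff_le.1 ?_
  calc alphaW (s k) ≤ w (k + 1) + alphaW (s k) := le_add_self
    _ ≤ w k + chiW (l k) := hdet k
    _ ≤ B + X := add_le_add (hwB k) (hX k)
    _ ≤ alphaW R := hR

/-- With total cost at most `A`, the affine bound `χ l ≤ αW δ / 2 + (χ A / c) l` for `l ≤ A` shows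
that storage would become negative if `s` stayed above `δ` for `N` steps, with `N` as large as
`hN` asks. -/
lemma trajectory_visit {alphaW chiW : ℝ≥0 → ℝ≥0} (halphaW : Monotone alphaW)
    (hchiW : Monotone chiW) {s l w : ℕ → ℝ≥0}
    (hdet : ∀ k, w (k + 1) + alphaW (s k) ≤ w k + chiW (l k))
    {A c δ w0 : ℝ≥0} (hA : ∀ N, ∑ k ∈ Finset.range N, l k ≤ A) (hc : 0 < c)
    (hchic : chiW c ≤ alphaW δ / 2) (hw0 : w 0 ≤ w0) {N : ℕ}
    (hN : (w0 + chiW A / c * A : ℝ) < N * (alphaW δ / 2 : ℝ)) : ∃ j < N, s j ≤ δ := by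
  by_contra! hcon
  have hlA : ∀ k, l k ≤ A := fun k =>
    (Finset.single_le_sum (fun _ _ => bot_le) (Finset.self_mem_range_succ k)).trans (hA (k + 1))
  have hchi : ∀ k, (chiW (l k) : ℝ) ≤ alphaW δ / 2 + chiW A / c * l k := by
    intro k
    rcases le_total (l k) c with h | h
    · have h1 : (chiW (l k) : ℝ) ≤ alphaW δ / 2 := by
        exact_mod_cast (hchiW h).trans hchic
      have h2 : (0 : ℝ) ≤ chiW A / c * l k := by positivity
      linarith
    · have h1 : (chiW (l k) : ℝ) ≤ chiW A := by exact_mod_cast hchiW (hlA k)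
      have hc' : (0 : ℝ) < c := by exact_mod_cast hc
      have h2 : (chiW A : ℝ) ≤ chiW A / c * l k := by
        rw [div_mul_eq_mul_div, le_div_iff₀ hc']
        exact mul_le_mul_of_nonneg_left (by exact_mod_cast h) (NNReal.coe_nonneg _)
      have h3 : (0 : ℝ) ≤ alphaW δ := NNReal.coe_nonneg _
      linarith
  have hind : ∀ k, k ≤ N → (w k + k * (alphaW δ / 2) : ℝ) ≤
      w 0 + chiW A / c * ∑ j ∈ Finset.range k, (l j : ℝ) := by
    intro k
    induction k with
    | zero => simp
    | succ k ih =>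
      intro hk
      have h1 := ih (by omega)
      have h2 : (w (k + 1) + alphaW (s k) : ℝ) ≤ w k + chiW (l k) := by exact_mod_cast hdet k
      have h3 : (alphaW δ : ℝ) ≤ alphaW (s k) := by
        exact_mod_cast halphaW (hcon k (by omega)).le
      rw [Finset.sum_range_succ]
      push_cast
      linarith [hchi k]
  have h1 := hind N le_rfl
  have h2 : (∑ j ∈ Finset.range N, (l j : ℝ)) ≤ A := by exact_mod_cast hA N
  have h3 : (chiW A / c * ∑ j ∈ Finset.range N, (l j : ℝ) : ℝ) ≤ chiW A / c * A :=
    mul_le_mul_of_nonneg_left h2 (by positivity)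
  have h4 : (w 0 : ℝ) ≤ w0 := by exact_mod_cast hw0
  linarith [NNReal.coe_nonneg (w N)]

/-- Near zero, a continuous gain vanishing at zero is at most any prescribed `ε`. -/
lemma exists_pos_forall_le {g : ℝ≥0 → ℝ≥0} (hg : Continuous g) (h0 : g 0 = 0) {ε : ℝ≥0}
    (hε : 0 < ε) : ∃ δ > 0, ∀ r ≤ δ, g r ≤ ε := by
  have h : ∀ᶠ r in 𝓝 (0 : ℝ≥0), g r < ε := hg.continuousAt.eventually_lt_const (by rwa [h0])
  obtain ⟨δ, hδ, hb⟩ := NNReal.nhds_zero_basis.eventually_iff.1 h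
  refine ⟨δ / 2, by positivity, fun r hr => (hb ?_).le⟩
  exact hr.trans_lt (NNReal.half_lt_self hδ.ne')

/-- A shift-invariant family of detectable trajectories whose total costs are bounded by `αV` of the
initial value of `s` admits a common class-KL bound. -/
lemma exists_classKL_of_detectable {ι : Type*} (s l w : ι → ℕ → ℝ≥0) (shift : ι → ℕ → ι)
    (hshift : ∀ i j k, s (shift i j) k = s i (j + k))
    {alphaW chiW alphaWbar alphaV : ℝ≥0 → ℝ≥0} (halphaW : ClassKInf alphaW)
    (hchiW : ClassKInf chiW) (hbarcont : Continuous alphaWbar) (hbarmono : Monotone alphaWbar)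
    (hbar0 : alphaWbar 0 = 0) (halphaV : ClassKInf alphaV)
    (hw : ∀ i k, w i k ≤ alphaWbar (s i k))
    (hdet : ∀ i k, w i (k + 1) + alphaW (s i k) ≤ w i k + chiW (l i k))
    (hl : ∀ i N, ∑ k ∈ Finset.range N, l i k ≤ alphaV (s i 0)) :
    ∃ β : ℝ≥0 → ℝ≥0 → ℝ≥0, ClassKL β ∧ ∀ i (k : ℕ), s i k ≤ β (s i 0) (k : ℝ≥0) := by
  obtain ⟨hWc, hWm, hW0, hWu⟩ := halphaW
  obtain ⟨hXc, hXm, hX0, hXu⟩ := hchiW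
  obtain ⟨hVc, hVm, hV0, hVu⟩ := halphaV
  have hWpos : ∀ r, 0 < r → 0 < alphaW r := fun r hr => by
    have := hWm hr
    rwa [hW0] at this
  have hlr : ∀ i r, s i 0 ≤ r → ∀ k, chiW (l i k) ≤ chiW (alphaV r) := fun i r hi k =>
    hXm.monotone <| (Finset.single_le_sum (fun _ _ => bot_le)
      (Finset.self_mem_range_succ k)).trans ((hl i (k + 1)).trans (hVm.monotone hi))
  have hs : ∀ ε > 0, ∃ δ > 0, ∀ i, s i 0 ≤ δ → ∀ k, s i k ≤ ε := by
    intro ε hε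
    have he : 0 < alphaW ε / 3 := by have := hWpos ε hε; positivity
    obtain ⟨p, hp, hpb⟩ := exists_pos_forall_le hbarcont hbar0 he
    have hX : 0 < min (alphaW p) (alphaW ε / 3) := lt_min (hWpos p hp) he
    obtain ⟨δ, hδ, hδX⟩ := exists_pos_forall_le (hXc.comp hVc)
      (by simp [hV0, hX0]) hX
    refine ⟨min δ p, lt_min hδ hp, fun i hi k => ?_⟩
    refine trajectory_bound hWm hbarmono (hw i) (hdet i) (X := min (alphaW p) (alphaW ε / 3))
      (p := p) (B := alphaW ε / 3 + alphaW ε / 3)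
      (fun k => (hlr i _ hi k).trans (hδX _ (min_le_left _ _))) (min_le_left _ _) ?_ ?_ ?_ k
    · exact (hpb _ (hi.trans (min_le_right _ _))).trans le_self_add
    · exact add_le_add (hpb p le_rfl) (min_le_right _ _)
    · refine (add_le_add_right (min_le_right _ _) _).trans (le_of_eq ?_)
      rw [← NNReal.coe_inj]
      push_cast
      ring
  refine exists_classKL_of_uniform s (fun r => ?_) hs fun r ε hε => ?_
  · obtain ⟨p, hp⟩ := hWu (chiW (alphaV r))
    obtain ⟨R, hR⟩ := hWu (max (alphaWbar r) (alphaWbar p + chiW (alphaV r)) + chiW (alphaV r))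
    exact ⟨R, fun i hi k => trajectory_bound hWm hbarmono (hw i) (hdet i) (hlr i r hi) hp
      ((hbarmono hi).trans (le_max_left _ _)) (le_max_right _ _) hR k⟩
  · obtain ⟨δ, hδ, hstab⟩ := hs ε hε
    have ha := hWpos δ hδ
    obtain ⟨c, hc, hcb⟩ := exists_pos_forall_le hXc hX0 (show 0 < alphaW δ / 2 by positivity)
    have ha' : (0 : ℝ) < alphaW δ / 2 := by positivity
    obtain ⟨N, hN⟩ := exists_nat_gt
      ((alphaWbar r + chiW (alphaV r) / c * alphaV r : ℝ) / (alphaW δ / 2 : ℝ))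
    rw [div_lt_iff₀ ha'] at hN
    refine ⟨N, fun i hi k hk => ?_⟩
    obtain ⟨j, hj, hsj⟩ := trajectory_visit hWm.monotone hXm.monotone (hdet i)
      (fun N => (hl i N).trans (hVm.monotone hi)) hc (hcb c le_rfl)
      ((hw i 0).trans (hbarmono hi)) hN
    have h := hstab (shift i j) (by rwa [hshift]) (k - j)
    rwa [hshift, Nat.add_sub_of_le (by omega)] at h

/-! ### Policy improvement -/

lemma phiCL_add (f : (Fin n → ℝ) → (Fin m → ℝ) → Fin n → ℝ)
    (h : (Fin n → ℝ) → Fin m → ℝ) (x : Fin n → ℝ) (j k : ℕ) :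
    phiCL f h (phiCL f h x j) k = phiCL f h x (j + k) := by
  induction k with
  | zero => rfl
  | succ k ih => rw [← add_assoc, phiCL, phiCL, ih]

lemma Jcost_eq_add (f : (Fin n → ℝ) → (Fin m → ℝ) → Fin n → ℝ)
    (ℓ : (Fin n → ℝ) → (Fin m → ℝ) → ℝ≥0) (x : Fin n → ℝ) (h : (Fin n → ℝ) → Fin m → ℝ) :
    Jcost f ℓ x h = ℓ x (h x) + Jcost f ℓ (f x (h x)) h := by
  rw [Jcost, tsum_eq_zero_add' ENNReal.summable, Jcost]
  congr 1
  refine tsum_congr fun k => ?_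
  have := phiCL_add f h x 1 k
  rw [add_comm 1 k] at this
  rw [← this]
  rfl

/-- If `V` decreases by at least the stage cost along the closed loop of `h`, then `V` bounds the
cost of `h`. -/
lemma Jcost_le_of_decrease (f : (Fin n → ℝ) → (Fin m → ℝ) → Fin n → ℝ)
    (ℓ : (Fin n → ℝ) → (Fin m → ℝ) → ℝ≥0) (h : (Fin n → ℝ) → Fin m → ℝ)
    (V : (Fin n → ℝ) → ℝ≥0∞) (hV : ∀ x, ℓ x (h x) + V (f x (h x)) ≤ V x) (x : Fin n → ℝ) :
    Jcost f ℓ x h ≤ V x := by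
  have key : ∀ N, (∑ k ∈ Finset.range N, (ℓ (phiCL f h x k) (h (phiCL f h x k)) : ℝ≥0∞))
      + V (phiCL f h x N) ≤ V x := by
    intro N
    induction N with
    | zero => simp [phiCL]
    | succ N ih =>
      rw [Finset.sum_range_succ, add_assoc]
      exact (add_le_add_right (hV (phiCL f h x N)) _).trans ih
  exact ENNReal.tsum_le_of_sum_range_le fun N => le_self_add.trans (key N)

/-- under recursive feasibility of PI, detectability, and the
initial stabilizing bound, there is a single class-KL function `β` such that
`σ(φ(k,x,hⁱ)) ≤ β(σ(x),k)` for all iterations `i`, states `x` and times `k`. -/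
theorem pi_recursive_stability
    (f : (Fin n → ℝ) → (Fin m → ℝ) → Fin n → ℝ)
    (ℓ : (Fin n → ℝ) → (Fin m → ℝ) → ℝ≥0)
    (Uset : (Fin n → ℝ) → Set (Fin m → ℝ))
    (hUne : ∀ x, (Uset x).Nonempty)
    (σ : (Fin n → ℝ) → ℝ≥0) (hσ : Continuous σ)
    -- PI sequence: admissible policies, each `h^{i+1}(x)` minimizing
    -- `u ↦ ℓ(x,u) + Vⁱ(f(x,u))` over `U(x)` with `Vⁱ = J(·, hⁱ)`
    (hseq : ℕ → (Fin n → ℝ) → Fin m → ℝ)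
    (hadm : ∀ i x, hseq i x ∈ Uset x)
    (hPI : ∀ i x, ∀ u ∈ Uset x,
      (ℓ x (hseq (i + 1) x) : ℝ≥0∞) + Jcost f ℓ (f x (hseq (i + 1) x)) (hseq i)
        ≤ (ℓ x u : ℝ≥0∞) + Jcost f ℓ (f x u) (hseq i))
    -- detectability assumption
    (W : (Fin n → ℝ) → ℝ≥0) (hWcont : Continuous W)
    (alphaW chiW : ℝ≥0 → ℝ≥0) (halphaW : ClassKInf alphaW) (hchiW : ClassKInf chiW)
    (alphaWbar : ℝ≥0 → ℝ≥0) (halphaWbar_cont : Continuous alphaWbar)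
    (halphaWbar_mono : Monotone alphaWbar) (halphaWbar_zero : alphaWbar 0 = 0)
    (hdet1 : ∀ x, W x ≤ alphaWbar (σ x))
    (hdet2 : ∀ x, ∀ u ∈ Uset x, W (f x u) + alphaW (σ x) ≤ W x + chiW (ℓ x u))
    -- initial stabilizing bound `V⁰ ≤ ᾱ_V ∘ σ`
    (alphaV : ℝ≥0 → ℝ≥0) (halphaV : ClassKInf alphaV)
    (hV0 : ∀ x, Jcost f ℓ x (hseq 0) ≤ (alphaV (σ x) : ℝ≥0∞)) :
    ∃ β : ℝ≥0 → ℝ≥0 → ℝ≥0, ClassKL β ∧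
      ∀ (i : ℕ) (x : Fin n → ℝ) (k : ℕ),
        σ (phiCL f (hseq i) x k) ≤ β (σ x) (k : ℝ≥0) := by
  have hV : ∀ i x, Jcost f ℓ x (hseq i) ≤ (alphaV (σ x) : ℝ≥0∞) := by
    intro i
    induction i with
    | zero => exact hV0
    | succ i ih =>
      intro x
      refine le_trans ?_ (ih x)
      refine Jcost_le_of_decrease f ℓ (hseq (i + 1)) (fun x => Jcost f ℓ x (hseq i)) ?_ x
      intro y
      refine (hPI i y _ (hadm i y)).trans (le_of_eq ?_)
      rw [← Jcost_eq_add]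
  obtain ⟨β, hβ, h⟩ := exists_classKL_of_detectable
    (ι := ℕ × (Fin n → ℝ))
    (fun q k => σ (phiCL f (hseq q.1) q.2 k))
    (fun q k => ℓ (phiCL f (hseq q.1) q.2 k) (hseq q.1 (phiCL f (hseq q.1) q.2 k)))
    (fun q k => W (phiCL f (hseq q.1) q.2 k))
    (fun q j => (q.1, phiCL f (hseq q.1) q.2 j))
    (fun q j k => by simp only [phiCL_add])
    halphaW hchiW halphaWbar_cont halphaWbar_mono halphaWbar_zero halphaV
    (fun q k => hdet1 _) (fun q k => hdet2 _ _ (hadm _ _))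
    (fun q N => by
      rw [← ENNReal.coe_le_coe, ENNReal.ofNNReal_finsetSum]
      exact (ENNReal.sum_le_tsum _).trans (hV q.1 q.2))
  exact ⟨β, hβ, fun i x k => h (i, x) k⟩

end
end

section
/- Suppose a PI sequence (h^i)_{i≥0} exists, the initial stabilizing bound V⁰ ≤ ᾱ_V∘σ holds with ᾱ_V of class K∞, and h* is an admissible globally optimal policy. Then for every iteration i ≥ 0 and every x ∈ ℝ^n, V^i(x) − V*(x) ≤ V⁰(φ(i,x,h*)) − V*(φ(i,x,h*)), where V* := J(·,h*). (All quantities are finite: V* ≤ V^i ≤ V⁰ ≤ ᾱ_V∘σ.) -/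
/-!
The argument rests on the Bellman equation `J(x,h) = ℓ(x,h(x)) + J(f(x,h(x)),h)`
(`Jcost_bellman`) and on the comparison principle that a function `W` with
`ℓ(x,h(x)) + W(f(x,h(x))) ≤ W(x)` for all `x` dominates `J(·,h)` (`Jcost_le_of_super`).
Using the input `hⁱ(x)` as a competitor in the minimization shows that `W = Vⁱ` satisfies
this inequality for `h = hⁱ⁺¹`, so `Vⁱ⁺¹ ≤ Vⁱ`. Inserting this into the Bellman equation of
`hⁱ⁺¹` gives `Vⁱ⁺¹(x) ≤ ℓ(x,u) + Vⁱ(f(x,u))` for every admissible `u` (`Jcost_succ_le`).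
With `u = h*(x)` the stage cost cancels against the one in the Bellman equation of `V*`:
`Vⁱ⁺¹(x) - V*(x) ≤ Vⁱ(y) - V*(y)`, where `y = f(x,h*(x))`. Iterating along the optimal
trajectory gives the estimate.
-/

open scoped NNReal ENNReal Topology

noncomputable section

variable {n m : ℕ}

/-- Open-loop solution of `x(k+1) = f(x(k), u(k))` from `x`. -/
def phiOL (f : (Fin n → ℝ) → (Fin m → ℝ) → Fin n → ℝ)
    (x : Fin n → ℝ) (u : ℕ → Fin m → ℝ) : ℕ → Fin n → ℝ
  | 0 => x
  | k + 1 => f (phiOL f x u k) (u k)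

/-- Infinite-horizon cost of an input sequence, valued in `[0,∞]`. -/
def JcostOL (f : (Fin n → ℝ) → (Fin m → ℝ) → Fin n → ℝ)
    (ℓ : (Fin n → ℝ) → (Fin m → ℝ) → ℝ≥0)
    (x : Fin n → ℝ) (u : ℕ → Fin m → ℝ) : ℝ≥0∞ :=
  ∑' k : ℕ, (ℓ (phiOL f x u k) (u k) : ℝ≥0∞)

theorem phiCL_succ_shift (f : (Fin n → ℝ) → (Fin m → ℝ) → Fin n → ℝ)
    (h : (Fin n → ℝ) → Fin m → ℝ) (x : Fin n → ℝ) (k : ℕ) :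
    phiCL f h x (k + 1) = phiCL f h (f x (h x)) k := by
  induction k with
  | zero => rfl
  | succ k ih =>
    rw [phiCL, ih]
    rfl

theorem phiOL_feedback (f : (Fin n → ℝ) → (Fin m → ℝ) → Fin n → ℝ)
    (h : (Fin n → ℝ) → Fin m → ℝ) (x : Fin n → ℝ) (k : ℕ) :
    phiOL f x (fun j => h (phiCL f h x j)) k = phiCL f h x k := by
  induction k with
  | zero => rfl
  | succ k ih => rw [phiOL, ih, phiCL]

/-- The Bellman equation of a fixed policy. -/
theorem Jcost_bellman (f : (Fin n → ℝ) → (Fin m → ℝ) → Fin n → ℝ)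
    (ℓ : (Fin n → ℝ) → (Fin m → ℝ) → ℝ≥0)
    (h : (Fin n → ℝ) → Fin m → ℝ) (x : Fin n → ℝ) :
    Jcost f ℓ x h = (ℓ x (h x) : ℝ≥0∞) + Jcost f ℓ (f x (h x)) h := by
  unfold Jcost
  rw [tsum_eq_zero_add' ENNReal.summable]
  simp only [phiCL_succ_shift]
  rfl

/-- Comparison principle: iterating the one-step inequality bounds every partial sum of the
cost by `W x`, since the remaining term `W (φ(N,x,h))` is nonnegative. -/
theorem Jcost_le_of_super (f : (Fin n → ℝ) → (Fin m → ℝ) → Fin n → ℝ)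
    (ℓ : (Fin n → ℝ) → (Fin m → ℝ) → ℝ≥0)
    (h : (Fin n → ℝ) → Fin m → ℝ) (W : (Fin n → ℝ) → ℝ≥0∞)
    (hW : ∀ x, (ℓ x (h x) : ℝ≥0∞) + W (f x (h x)) ≤ W x) (x : Fin n → ℝ) :
    Jcost f ℓ x h ≤ W x := by
  have key : ∀ N, ∑ k ∈ Finset.range N, (ℓ (phiCL f h x k) (h (phiCL f h x k)) : ℝ≥0∞)
      + W (phiCL f h x N) ≤ W x := by
    intro N
    induction N with
    | zero => simp [phiCL]
    | succ N ih =>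
      rw [Finset.sum_range_succ, add_assoc]
      exact (add_le_add_right (hW _) _).trans ih
  unfold Jcost
  rw [ENNReal.tsum_eq_iSup_nat]
  exact iSup_le fun N => le_self_add.trans (key N)

/-- One policy-improvement step: `g` minimizes `u ↦ ℓ(x,u) + J(f(x,u),h)` over the admissible
inputs, so its cost is at most that of `h`. -/
theorem Jcost_improve (f : (Fin n → ℝ) → (Fin m → ℝ) → Fin n → ℝ)
    (ℓ : (Fin n → ℝ) → (Fin m → ℝ) → ℝ≥0) (Uset : (Fin n → ℝ) → Set (Fin m → ℝ))
    (h g : (Fin n → ℝ) → Fin m → ℝ) (hadm : ∀ x, h x ∈ Uset x)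
    (hmin : ∀ x, ∀ u ∈ Uset x, (ℓ x (g x) : ℝ≥0∞) + Jcost f ℓ (f x (g x)) h
      ≤ (ℓ x u : ℝ≥0∞) + Jcost f ℓ (f x u) h) (x : Fin n → ℝ) :
    Jcost f ℓ x g ≤ Jcost f ℓ x h :=
  Jcost_le_of_super f ℓ g (fun y => Jcost f ℓ y h)
    (fun y => (hmin y _ (hadm y)).trans (Jcost_bellman f ℓ h y).ge) x

/-- The cost of the improved policy is bounded by the one-step lookahead cost of any
admissible input. -/
theorem Jcost_succ_le (f : (Fin n → ℝ) → (Fin m → ℝ) → Fin n → ℝ)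
    (ℓ : (Fin n → ℝ) → (Fin m → ℝ) → ℝ≥0) (Uset : (Fin n → ℝ) → Set (Fin m → ℝ))
    (h g : (Fin n → ℝ) → Fin m → ℝ) (hadm : ∀ x, h x ∈ Uset x)
    (hmin : ∀ x, ∀ u ∈ Uset x, (ℓ x (g x) : ℝ≥0∞) + Jcost f ℓ (f x (g x)) h
      ≤ (ℓ x u : ℝ≥0∞) + Jcost f ℓ (f x u) h)
    (x : Fin n → ℝ) (u : Fin m → ℝ) (hu : u ∈ Uset x) :
    Jcost f ℓ x g ≤ (ℓ x u : ℝ≥0∞) + Jcost f ℓ (f x u) h := by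
  rw [Jcost_bellman f ℓ g x]
  exact (add_le_add_right (Jcost_improve f ℓ Uset h g hadm hmin _) _).trans (hmin x u hu)

/-- `Vⁱ(x) − V*(x) ≤ V⁰(φ(i,x,h*)) − V*(φ(i,x,h*))`, together
with the finiteness chain `V* ≤ Vⁱ ≤ V⁰ ≤ ᾱ_V∘σ`. -/
theorem pi_near_optimality_abstract
    (f : (Fin n → ℝ) → (Fin m → ℝ) → Fin n → ℝ)
    (ℓ : (Fin n → ℝ) → (Fin m → ℝ) → ℝ≥0)
    (Uset : (Fin n → ℝ) → Set (Fin m → ℝ))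
    (hUne : ∀ x, (Uset x).Nonempty)
    (σ : (Fin n → ℝ) → ℝ≥0) (hσ : Continuous σ)
    -- PI sequence
    (hseq : ℕ → (Fin n → ℝ) → Fin m → ℝ)
    (hadm : ∀ i x, hseq i x ∈ Uset x)
    (hPI : ∀ i x, ∀ u ∈ Uset x,
      (ℓ x (hseq (i + 1) x) : ℝ≥0∞) + Jcost f ℓ (f x (hseq (i + 1) x)) (hseq i)
        ≤ (ℓ x u : ℝ≥0∞) + Jcost f ℓ (f x u) (hseq i))
    -- initial stabilizing bound `V⁰ ≤ ᾱ_V ∘ σ`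
    (alphaV : ℝ≥0 → ℝ≥0) (halphaV : ClassKInf alphaV)
    (hV0 : ∀ x, Jcost f ℓ x (hseq 0) ≤ (alphaV (σ x) : ℝ≥0∞))
    -- `h*` : admissible globally optimal policy
    (hstar : (Fin n → ℝ) → Fin m → ℝ)
    (hstar_adm : ∀ x, hstar x ∈ Uset x)
    (hstar_fin : ∀ x, Jcost f ℓ x hstar < ⊤)
    (hstar_opt : ∀ (x : Fin n → ℝ) (u : ℕ → Fin m → ℝ),
      (∀ k, u k ∈ Uset (phiOL f x u k)) → Jcost f ℓ x hstar ≤ JcostOL f ℓ x u) :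
    ∀ (i : ℕ) (x : Fin n → ℝ),
      Jcost f ℓ x hstar ≤ Jcost f ℓ x (hseq i) ∧
      Jcost f ℓ x (hseq i) ≤ Jcost f ℓ x (hseq 0) ∧
      Jcost f ℓ x (hseq 0) ≤ (alphaV (σ x) : ℝ≥0∞) ∧
      Jcost f ℓ x (hseq i) - Jcost f ℓ x hstar
        ≤ Jcost f ℓ (phiCL f hstar x i) (hseq 0)
            - Jcost f ℓ (phiCL f hstar x i) hstar := by
  intro i x
  refine ⟨?_, ?_, hV0 x, ?_⟩
  · -- The inputs generated by `hⁱ` along its own trajectory form an admissible sequence.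
    refine (hstar_opt x (fun k => hseq i (phiCL f (hseq i) x k)) fun k => ?_).trans_eq ?_
    · rw [phiOL_feedback]
      exact hadm i _
    · simp only [JcostOL, Jcost, phiOL_feedback]
  · induction i with
    | zero => exact le_rfl
    | succ i ih => exact (Jcost_improve f ℓ Uset _ _ (hadm i) (hPI i) x).trans ih
  · induction i generalizing x with
    | zero => exact le_rfl
    | succ i ih =>
      rw [phiCL_succ_shift]
      refine le_trans ?_ (ih (f x (hstar x)))
      rw [Jcost_bellman f ℓ hstar x]
      refine (tsub_le_tsub_right (Jcost_succ_le f ℓ Uset _ _ (hadm i) (hPI i) x _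
        (hstar_adm x)) _).trans_eq ?_
      -- Cancelling the common stage cost in `[0,∞]` uses that it is finite.
      exact ENNReal.add_sub_add_eq_sub_left ENNReal.coe_ne_top

end
end

section
/- Suppose the detectability assumption holds with χ_W(s) ≤ s for all s ≥ 0, h⁰ is an admissible policy with V⁰ := J(·,h⁰) ≤ ᾱ_V∘σ for some class-K∞ function ᾱ_V, and h* is an admissible policy with V* := J(·,h*) finite-valued and V* ≤ V⁰ pointwise. Then for every x ∈ ℝ^n, V⁰(x) − V*(x) ≤ min{ ᾱ_V(σ(x)), ᾱ_V(σ(x)) + ᾱ_W(σ(x)) − α_W(σ(x)) }. -/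
/-!
The gap is at most `V⁰(x) ≤ ᾱ_V(σ(x))` because `V* ≥ 0`. For the second bound, `V*(x)` is bounded
below by its first stage cost, and a single step of the detectability inequality along `h*`
bounds that cost: since `W ≥ 0` at the successor state and `χ_W ≤ id`,
`α_W(σ(x)) ≤ W(x) + ℓ(x, h*(x)) ≤ ᾱ_W(σ(x)) + V*(x)`.
-/

open scoped NNReal ENNReal Topology

noncomputable section

variable {n m : ℕ}

/-- under detectability with `χ_W ≤ id`, an initial stabilizing
bound for `h⁰`, and an admissible policy `h*` with finite cost `V* ≤ V⁰`,
the initial near-optimality gap satisfies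
`V⁰(x) − V*(x) ≤ min{ᾱ_V(σ(x)), ᾱ_V(σ(x)) + ᾱ_W(σ(x)) − α_W(σ(x))}`. -/
theorem initial_near_optimality_gap_bound
    (f : (Fin n → ℝ) → (Fin m → ℝ) → Fin n → ℝ)
    (ℓ : (Fin n → ℝ) → (Fin m → ℝ) → ℝ≥0)
    (Uset : (Fin n → ℝ) → Set (Fin m → ℝ))
    (hUne : ∀ x, (Uset x).Nonempty)
    (σ : (Fin n → ℝ) → ℝ≥0) (hσ : Continuous σ)
    -- detectability assumption, with `χ_W(s) ≤ s`
    (W : (Fin n → ℝ) → ℝ≥0) (hWcont : Continuous W)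
    (alphaW chiW : ℝ≥0 → ℝ≥0) (halphaW : ClassKInf alphaW) (hchiW : ClassKInf chiW)
    (hchiW_le : ∀ s : ℝ≥0, chiW s ≤ s)
    (alphaWbar : ℝ≥0 → ℝ≥0) (halphaWbar_cont : Continuous alphaWbar)
    (halphaWbar_mono : Monotone alphaWbar) (halphaWbar_zero : alphaWbar 0 = 0)
    (hdet1 : ∀ x, W x ≤ alphaWbar (σ x))
    (hdet2 : ∀ x, ∀ u ∈ Uset x, W (f x u) + alphaW (σ x) ≤ W x + chiW (ℓ x u))
    -- initial admissible policy `h⁰` with `V⁰ := J(·,h⁰) ≤ ᾱ_V ∘ σ`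
    (h0 : (Fin n → ℝ) → Fin m → ℝ) (h0adm : ∀ x, h0 x ∈ Uset x)
    (alphaV : ℝ≥0 → ℝ≥0) (halphaV : ClassKInf alphaV)
    (hV0 : ∀ x, Jcost f ℓ x h0 ≤ (alphaV (σ x) : ℝ≥0∞))
    -- admissible policy `h*` with `V* := J(·,h*)` finite and `V* ≤ V⁰`
    (hstar : (Fin n → ℝ) → Fin m → ℝ) (hstar_adm : ∀ x, hstar x ∈ Uset x)
    (hstar_fin : ∀ x, Jcost f ℓ x hstar < ⊤)
    (hstar_le : ∀ x, Jcost f ℓ x hstar ≤ Jcost f ℓ x h0) :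
    ∀ x : Fin n → ℝ,
      (Jcost f ℓ x h0).toReal - (Jcost f ℓ x hstar).toReal
        ≤ min ((alphaV (σ x) : ℝ))
            ((alphaV (σ x) : ℝ) + (alphaWbar (σ x) : ℝ) - (alphaW (σ x) : ℝ)) := by
  intro x
  have h0le : (Jcost f ℓ x h0).toReal ≤ (alphaV (σ x) : ℝ) :=
    ENNReal.toReal_mono ENNReal.coe_ne_top (hV0 x)
  have hstar0 : 0 ≤ (Jcost f ℓ x hstar).toReal := ENNReal.toReal_nonneg
  -- the stage cost at `k = 0` is one term of the series `V*(x)`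
  have hterm : (ℓ x (hstar x) : ℝ≥0∞) ≤ Jcost f ℓ x hstar :=
    ENNReal.le_tsum (f := fun k : ℕ =>
      (ℓ (phiCL f hstar x k) (hstar (phiCL f hstar x k)) : ℝ≥0∞)) 0
  -- finiteness of `V*(x)` is what keeps `toReal` from collapsing it to `0`
  have hcost : (ℓ x (hstar x) : ℝ) ≤ (Jcost f ℓ x hstar).toReal :=
    ENNReal.toReal_mono (hstar_fin x).ne hterm
  have hd : (W (f x (hstar x)) : ℝ) + alphaW (σ x) ≤ W x + chiW (ℓ x (hstar x)) :=
    mod_cast hdet2 x _ (hstar_adm x)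
  have hchi : (chiW (ℓ x (hstar x)) : ℝ) ≤ ℓ x (hstar x) := mod_cast hchiW_le _
  have hW : (W x : ℝ) ≤ alphaWbar (σ x) := mod_cast hdet1 x
  have hW0 : (0 : ℝ) ≤ W (f x (hstar x)) := NNReal.coe_nonneg _
  refine le_min ?_ ?_ <;> linarith

end
end

section
/- Suppose the detectability assumption holds, h is an admissible policy, and V : ℝ^n → [0,∞) satisfies, for every x: V(x) = ℓ(x,h(x)) + V(f(x,h(x))) and V(x) ≤ ᾱ_V(σ(x)) for some class-K∞ function ᾱ_V. Then there exist class-K∞ functions ρ_V, ρ_W, α_Y (lower), ᾱ_Y (upper) and α_Y' (decrease rate) such that the function Y := ρ_V∘V + ρ_W∘W satisfies, for every x ∈ ℝ^n: α_Y(σ(x)) ≤ Y(x) ≤ ᾱ_Y(σ(x)) and Y(f(x,h(x))) − Y(x) ≤ −α_Y'(σ(x)). -/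
/-!
The weights have the form `s * a s`, where `a` is of class `K∞`. Such a weight is superadditive, so a
step that lowers its argument by `d` lowers its value by at least the weight of `d`.

Write `K l = alphaWbar (alphaW⁻¹ (2 * chiW l)) + chiW l`, a class-`K∞` function, and let
`rhoW s = s * K⁻¹ s` and `rhoV l = 2 * (l * K l)`, so that `rhoV l = 2 * rhoW (K l)`. Compare the stage
cost `l` with the state measure `s` along one closed-loop step.

* If `chiW l ≤ alphaW s / 2`, then `W` drops by at least `alphaW s / 2`, so `rhoW ∘ W` drops by at
  least `rhoW (alphaW s / 2)`, and `V` does not increase.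
* Otherwise `s ≤ alphaW⁻¹ (2 * chiW l)`, so the successor value of `W` is at most `K l`. As `V` drops
  by exactly `l`, `rhoV ∘ V` drops by at least `2 * rhoW (K l)`. One half pays for the possible growth
  of `rhoW ∘ W`; the other is at least `rhoW (chiW l) ≥ rhoW (alphaW s / 2)`.

Both cases give the decrease rate `s ↦ rhoW (alphaW s / 2)`. Since `Y ≥ 0` after the step, the same
function bounds `Y` from below.
-/


open scoped NNReal ENNReal Topology

noncomputable section

variable {n m : ℕ}

namespace ClassKInf

variable {a b : ℝ≥0 → ℝ≥0}

lemma comp (ha : ClassKInf a) (hb : ClassKInf b) : ClassKInf fun s => a (b s) := by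
  obtain ⟨ac, am, a0, au⟩ := ha
  obtain ⟨bc, bm, b0, bu⟩ := hb
  refine ⟨ac.comp bc, am.comp bm, by simp [a0, b0], fun M => ?_⟩
  obtain ⟨t, ht⟩ := au M
  obtain ⟨s, hs⟩ := bu t
  exact ⟨s, ht.trans (am.monotone hs)⟩

lemma add_mono (ha : ClassKInf a) (hc : Continuous b) (hm : Monotone b) (h0 : b 0 = 0) :
    ClassKInf fun s => a s + b s := by
  obtain ⟨ac, am, a0, au⟩ := ha
  refine ⟨ac.add hc, am.add_monotone hm, by simp [a0, h0], fun M => ?_⟩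
  obtain ⟨s, hs⟩ := au M
  exact ⟨s, hs.trans le_self_add⟩

lemma mul (ha : ClassKInf a) (hb : ClassKInf b) : ClassKInf fun s => a s * b s := by
  obtain ⟨ac, am, a0, au⟩ := ha
  obtain ⟨bc, bm, b0, bu⟩ := hb
  refine ⟨ac.mul bc, fun s t hst => mul_lt_mul'' (am hst) (bm hst) zero_le zero_le,
    by simp [a0], fun M => ?_⟩
  obtain ⟨s, hs⟩ := au M
  obtain ⟨t, ht⟩ := bu 1
  refine ⟨max s t, ?_⟩
  calc M = M * 1 := (mul_one M).symm
    _ ≤ a (max s t) * b (max s t) := mul_le_mul' (hs.trans (am.monotone (le_max_left s t)))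
        (ht.trans (bm.monotone (le_max_right s t)))

lemma id' : ClassKInf fun s => s :=
  ⟨continuous_id, strictMono_id, rfl, fun M => ⟨M, le_rfl⟩⟩

lemma const_mul {c : ℝ≥0} (hc : 0 < c) : ClassKInf fun s => c * s :=
  ⟨by fun_prop, fun _ _ hst => mul_lt_mul_of_pos_left hst hc, by simp,
    fun M => ⟨c⁻¹ * M, (mul_inv_cancel_left₀ hc.ne' M).ge⟩⟩

lemma exists_inverse (ha : ClassKInf a) :
    ∃ b, ClassKInf b ∧ (∀ s, b (a s) = s) ∧ ∀ s, a (b s) = s := by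
  obtain ⟨ac, am, a0, au⟩ := ha
  have hsurj : Function.Surjective a := by
    intro y
    obtain ⟨s, hs⟩ := au y
    obtain ⟨t, -, ht⟩ := intermediate_value_Icc (zero_le (a := s)) ac.continuousOn
      (show y ∈ Set.Icc (a 0) (a s) from ⟨by simp [a0], hs⟩)
    exact ⟨t, ht⟩
  let e := StrictMono.orderIsoOfSurjective a am hsurj
  have h1 : ∀ s, e.symm (a s) = s := fun s => e.symm_apply_apply s
  have h2 : ∀ s, a (e.symm s) = s := fun s => e.apply_symm_apply s
  refine ⟨e.symm, ⟨e.symm.continuous, e.symm.strictMono, ?_, fun M => ⟨a M, (h1 M).ge⟩⟩, h1, h2⟩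
  simpa [a0] using h1 0

end ClassKInf

lemma superadditive_id_mul {a : ℝ≥0 → ℝ≥0} (ha : Monotone a) (s t : ℝ≥0) :
    s * a s + t * a t ≤ (s + t) * a (s + t) := by
  rw [add_mul]
  exact add_le_add (mul_le_mul_right (ha le_self_add) s) (mul_le_mul_right (ha le_add_self) t)

/-- construction of a strict Lyapunov function
`Y = ρ_V ∘ V + ρ_W ∘ W` from detectability and a policy `h` whose cost-like
function `V` satisfies the Bellman-type identity and the stabilizing bound. -/
theorem lyapunov_construction
    (f : (Fin n → ℝ) → (Fin m → ℝ) → Fin n → ℝ)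
    (ℓ : (Fin n → ℝ) → (Fin m → ℝ) → ℝ≥0)
    (Uset : (Fin n → ℝ) → Set (Fin m → ℝ))
    (hUne : ∀ x, (Uset x).Nonempty)
    (σ : (Fin n → ℝ) → ℝ≥0) (hσ : Continuous σ)
    -- detectability assumption
    (W : (Fin n → ℝ) → ℝ≥0) (hWcont : Continuous W)
    (alphaW chiW : ℝ≥0 → ℝ≥0) (halphaW : ClassKInf alphaW) (hchiW : ClassKInf chiW)
    (alphaWbar : ℝ≥0 → ℝ≥0) (halphaWbar_cont : Continuous alphaWbar)
    (halphaWbar_mono : Monotone alphaWbar) (halphaWbar_zero : alphaWbar 0 = 0)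
    (hdet1 : ∀ x, W x ≤ alphaWbar (σ x))
    (hdet2 : ∀ x, ∀ u ∈ Uset x, W (f x u) + alphaW (σ x) ≤ W x + chiW (ℓ x u))
    -- admissible policy `h` and function `V` with Bellman identity and bound
    (h : (Fin n → ℝ) → Fin m → ℝ) (hadm : ∀ x, h x ∈ Uset x)
    (V : (Fin n → ℝ) → ℝ≥0)
    (hBell : ∀ x, V x = ℓ x (h x) + V (f x (h x)))
    (alphaV : ℝ≥0 → ℝ≥0) (halphaV : ClassKInf alphaV)
    (hVb : ∀ x, V x ≤ alphaV (σ x)) :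
    ∃ rhoV rhoW alphaYlow alphaYup alphaYdec : ℝ≥0 → ℝ≥0,
      ClassKInf rhoV ∧ ClassKInf rhoW ∧ ClassKInf alphaYlow ∧
      ClassKInf alphaYup ∧ ClassKInf alphaYdec ∧
      ∀ x : Fin n → ℝ,
        alphaYlow (σ x) ≤ rhoV (V x) + rhoW (W x) ∧
        rhoV (V x) + rhoW (W x) ≤ alphaYup (σ x) ∧
        rhoV (V (f x (h x))) + rhoW (W (f x (h x))) + alphaYdec (σ x)
          ≤ rhoV (V x) + rhoW (W x) := by
  obtain ⟨ainv, hainv, hainv1, -⟩ := halphaW.exists_inverse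
  have h2pos : (0 : ℝ≥0) < 2 := by norm_num
  -- the bound `K` on the successor value of `W` when the stage cost dominates
  obtain ⟨K, hKdef⟩ : ∃ K : ℝ≥0 → ℝ≥0, K = fun l => chiW l + alphaWbar (ainv (2 * chiW l)) :=
    ⟨_, rfl⟩
  have hin : ClassKInf fun l => ainv (2 * chiW l) :=
    hainv.comp ((ClassKInf.const_mul h2pos).comp hchiW)
  have hK : ClassKInf K := by
    rw [hKdef]
    exact hchiW.add_mono (halphaWbar_cont.comp hin.1) (halphaWbar_mono.comp hin.2.1.monotone)
      (by simp [hin.2.2.1, halphaWbar_zero])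
  obtain ⟨κ, hκ, hκ1, -⟩ := hK.exists_inverse
  obtain ⟨rW, hrW⟩ : ∃ r : ℝ≥0 → ℝ≥0, r = fun s => s * κ s := ⟨_, rfl⟩
  obtain ⟨rV, hrV⟩ : ∃ r : ℝ≥0 → ℝ≥0, r = fun l => 2 * (l * K l) := ⟨_, rfl⟩
  have hW : ClassKInf rW := hrW ▸ ClassKInf.id'.mul hκ
  have hV : ClassKInf rV := hrV ▸ (ClassKInf.const_mul h2pos).comp (ClassKInf.id'.mul hK)
  have hWsup : ∀ s t, rW s + rW t ≤ rW (s + t) := by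
    rw [hrW]; exact superadditive_id_mul hκ.2.1.monotone
  have hVsup : ∀ s t, rV s + rV t ≤ rV (s + t) := by
    intro s t
    simp only [hrV]
    rw [← mul_add]
    exact mul_le_mul_right (superadditive_id_mul hK.2.1.monotone s t) 2
  have hVW : ∀ l, rV l = rW (K l) + rW (K l) := by
    intro l
    simp only [hrV, hrW, hκ1]
    ring
  have hdecK : ClassKInf fun s => rW (2⁻¹ * alphaW s) :=
    hW.comp ((ClassKInf.const_mul (by norm_num)).comp halphaW)
  have hhalf : ∀ s, 2⁻¹ * alphaW s + 2⁻¹ * alphaW s = alphaW s := by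
    intro s
    rw [← two_mul, mul_inv_cancel_left₀ h2pos.ne']
  have hdec : ∀ x, rV (V (f x (h x))) + rW (W (f x (h x))) + rW (2⁻¹ * alphaW (σ x))
      ≤ rV (V x) + rW (W x) := by
    intro x
    have hd := hdet2 x (h x) (hadm x)
    have hB := hBell x
    rcases le_total (chiW (ℓ x (h x))) (2⁻¹ * alphaW (σ x)) with hc | hc
    · have hw : W (f x (h x)) + 2⁻¹ * alphaW (σ x) ≤ W x := by
        refine le_of_add_le_add_right (a := 2⁻¹ * alphaW (σ x)) ?_
        rw [add_assoc, hhalf]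
        exact hd.trans (add_le_add_right hc (W x))
      have hv : V (f x (h x)) ≤ V x := by rw [hB]; exact le_add_self
      rw [add_assoc]
      exact add_le_add (hV.2.1.monotone hv) ((hWsup _ _).trans (hW.2.1.monotone hw))
    · have hs : σ x ≤ ainv (2 * chiW (ℓ x (h x))) := by
        rw [← hainv1 (σ x)]
        apply hainv.2.1.monotone
        rw [← hhalf, two_mul]
        exact add_le_add hc hc
      have hw : W (f x (h x)) ≤ K (ℓ x (h x)) := by
        rw [hKdef]
        calc W (f x (h x)) ≤ W x + chiW (ℓ x (h x)) := le_self_add.trans hd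
          _ ≤ alphaWbar (ainv (2 * chiW (ℓ x (h x)))) + chiW (ℓ x (h x)) :=
            add_le_add_left ((hdet1 x).trans (halphaWbar_mono hs)) _
          _ = _ := add_comm _ _
      have hα : 2⁻¹ * alphaW (σ x) ≤ K (ℓ x (h x)) := by
        rw [hKdef]; exact hc.trans le_self_add
      have hv : rW (K (ℓ x (h x))) + rW (K (ℓ x (h x))) + rV (V (f x (h x))) ≤ rV (V x) := by
        rw [← hVW, hB]; exact hVsup _ _
      calc _ = rW (W (f x (h x))) + rW (2⁻¹ * alphaW (σ x)) + rV (V (f x (h x))) := by ring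
        _ ≤ rW (K (ℓ x (h x))) + rW (K (ℓ x (h x))) + rV (V (f x (h x))) :=
          add_le_add_left (add_le_add (hW.2.1.monotone hw) (hW.2.1.monotone hα)) _
        _ ≤ rV (V x) := hv
        _ ≤ _ := le_self_add
  refine ⟨rV, rW, fun s => rW (2⁻¹ * alphaW s), fun s => rV (alphaV s) + rW (alphaWbar s),
    fun s => rW (2⁻¹ * alphaW s), hV, hW, hdecK, ?_, hdecK, fun x => ⟨?_, ?_, hdec x⟩⟩
  · exact (hV.comp halphaV).add_mono (hW.1.comp halphaWbar_cont)
      (hW.2.1.monotone.comp halphaWbar_mono) (by simp [halphaWbar_zero, hW.2.2.1])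
  · exact le_add_self.trans (hdec x)
  · exact add_le_add (hV.2.1.monotone (hVb x)) (hW.2.1.monotone (hdet1 x))

end
end

section
/- Let σ : ℝ^n → [0,∞) be continuous, F assign to each x ∈ ℝ^n a set F(x) ⊆ ℝ^n, Y : ℝ^n → [0,∞), and let α₁, α₂, α₃ be class-K∞ functions with α₃(s) ≤ α₂(s) for all s ≥ 0 and such that the map s ↦ s − α₃(α₂⁻¹(s)) is nondecreasing on [0,∞). Assume that for every x ∈ ℝ^n and every v ∈ F(x): α₁(σ(x)) ≤ Y(x) ≤ α₂(σ(x)) and Y(v) − Y(x) ≤ −α₃(σ(x)). Then every solution φ of the difference inclusion (i.e., every sequence with φ(k+1) ∈ F(φ(k)) for all k) satisfies, for every k ≥ 0: σ(φ(k)) ≤ α₁⁻¹( (id − α₃∘α₂⁻¹)^{(k)}( α₂(σ(φ(0))) ) ), where (id − α₃∘α₂⁻¹)^{(k)} denotes the k-fold composition of s ↦ s − α₃(α₂⁻¹(s)) with itself. -/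
/-!
Write `T s = s - α₃ (α₂⁻¹ s)`. Since `Y ≤ α₂ ∘ σ`, `α₂⁻¹ (Y x) ≤ σ x`, so the decrease
condition gives `Y (φ (k + 1)) ≤ T (Y (φ k))` along every solution. As `T` is nondecreasing, induction
yields `Y (φ k) ≤ T^[k] (α₂ (σ (φ 0)))`, and `α₁ ∘ σ ≤ Y` turns this into the bound on `σ (φ k)`.
The sandwich inequalities are available at each `φ k` because `F (φ k)` contains `φ (k + 1)`.
-/

open scoped NNReal ENNReal Topology

noncomputable section

variable {n : ℕ}

/-- a strict Lyapunov function `Y` for the difference inclusion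
`φ(k+1) ∈ F(φ(k))` yields the decay estimate
`σ(φ(k)) ≤ α₁⁻¹((id − α₃∘α₂⁻¹)^{(k)}(α₂(σ(φ(0)))))`. -/
theorem lyapunov_to_decay
    (σ : (Fin n → ℝ) → ℝ≥0) (hσ : Continuous σ)
    (F : (Fin n → ℝ) → Set (Fin n → ℝ))
    (Y : (Fin n → ℝ) → ℝ≥0)
    (alpha1 alpha2 alpha3 : ℝ≥0 → ℝ≥0)
    (h1 : ClassKInf alpha1) (h2 : ClassKInf alpha2) (h3 : ClassKInf alpha3)
    -- inverses of the class-K∞ bijections `α₁`, `α₂`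
    (alpha1inv alpha2inv : ℝ≥0 → ℝ≥0)
    (h1li : Function.LeftInverse alpha1inv alpha1)
    (h1ri : Function.RightInverse alpha1inv alpha1)
    (h2li : Function.LeftInverse alpha2inv alpha2)
    (h2ri : Function.RightInverse alpha2inv alpha2)
    -- `α₃ ≤ α₂` and `s ↦ s − α₃(α₂⁻¹(s))` nondecreasing on `[0,∞)`
    (h32 : ∀ s : ℝ≥0, alpha3 s ≤ alpha2 s)
    (hmono : Monotone fun s : ℝ≥0 => s - alpha3 (alpha2inv s))
    -- Lyapunov sandwich and decrease along the inclusion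
    (hY : ∀ x : Fin n → ℝ, ∀ v ∈ F x,
      alpha1 (σ x) ≤ Y x ∧ Y x ≤ alpha2 (σ x) ∧ Y v + alpha3 (σ x) ≤ Y x) :
    ∀ φ : ℕ → Fin n → ℝ, (∀ k, φ (k + 1) ∈ F (φ k)) →
      ∀ k : ℕ,
        σ (φ k) ≤ alpha1inv
          ((fun s : ℝ≥0 => s - alpha3 (alpha2inv s))^[k] (alpha2 (σ (φ 0)))) := by
  intro φ hφ k
  set T : ℝ≥0 → ℝ≥0 := fun s => s - alpha3 (alpha2inv s) with hT
  have hstep : ∀ k, Y (φ (k + 1)) ≤ T (Y (φ k)) := by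
    intro k
    obtain ⟨-, hupper, hdecr⟩ := hY (φ k) (φ (k + 1)) (hφ k)
    have hinv : alpha2inv (Y (φ k)) ≤ σ (φ k) := by
      rw [← h2.2.1.le_iff_le, h2ri]
      exact hupper
    exact le_tsub_of_add_le_right
      ((add_le_add_right (h3.2.1.monotone hinv) _).trans hdecr)
  have hiter : ∀ k, Y (φ k) ≤ T^[k] (alpha2 (σ (φ 0))) := by
    intro k
    induction k with
    | zero => exact (hY _ _ (hφ 0)).2.1
    | succ k ih =>
      rw [Function.iterate_succ_apply']
      exact (hstep k).trans (hmono ih)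
  rw [← h1.2.1.le_iff_le, h1ri]
  exact (hY _ _ (hφ k)).1.trans (hiter k)

end
end

section
/- Let f : ℝ^n × ℝ^m → ℝ^n and ℓ : ℝ^n × ℝ^m → [0,∞) be continuous, let ℓ be level-bounded in u locally uniformly in x, let U assign to each x ∈ ℝ^n a nonempty set U(x) ⊆ ℝ^m such that the graph {(x,u) : u ∈ U(x)} is closed, and let V : ℝ^n → [0,∞) be lower semicontinuous. Then: (a) for every x ∈ ℝ^n, the set H(x) := {u ∈ U(x) : ℓ(x,u) + V(f(x,u)) ≤ ℓ(x,u') + V(f(x,u')) for all u' ∈ U(x)} of minimizers is nonempty and compact; (b) if moreover there exist a continuous σ : ℝ^n → [0,∞) and a class-K∞ function ᾱ_V such that inf_{u ∈ U(x)} [ℓ(x,u) + V(f(x,u))] ≤ ᾱ_V(σ(x)) for every x, then H is locally bounded: every x ∈ ℝ^n has a neighborhood S such that ∪_{z ∈ S} H(z) is bounded. -/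
/-!
Write `J x u = ℓ x u + V (f x u)`. For fixed `x` the function `J x` is lower semicontinuous, and since
`ℓ ≤ J`, level-boundedness of `ℓ` makes every sublevel set of `J x` in the closed set `U(x)` compact.
The Weierstrass theorem on one nonempty sublevel set yields a minimizer, and the set of minimizers
is the sublevel set at the minimal value, hence compact.

For local boundedness, on `H z` one has `ℓ z u ≤ J z u = inf J z ≤ αV (σ z)`, and `αV ∘ σ` is bounded
near `x` by continuity; the locally uniform level-boundedness of `ℓ` then gives one bounded set
containing all `H z` with `z` near `x`.
-/

open scoped NNReal ENNReal Topology

noncomputable section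

variable {n m : ℕ}

theorem lowerSemicontinuous_cost {n m : ℕ}
    {f : (Fin n → ℝ) → (Fin m → ℝ) → Fin n → ℝ}
    {ℓ : (Fin n → ℝ) → (Fin m → ℝ) → ℝ≥0}
    (hf : Continuous fun p : (Fin n → ℝ) × (Fin m → ℝ) => f p.1 p.2)
    (hl : Continuous fun p : (Fin n → ℝ) × (Fin m → ℝ) => ℓ p.1 p.2)
    {V : (Fin n → ℝ) → ℝ≥0} (hV : LowerSemicontinuous V) (x : Fin n → ℝ) :
    LowerSemicontinuous fun u => ℓ x u + V (f x u) := by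
  have h1 : Continuous fun u => f x u := hf.comp (Continuous.prodMk_right x)
  have h2 : Continuous fun u => ℓ x u := hl.comp (Continuous.prodMk_right x)
  exact h2.lowerSemicontinuous.add (hV.comp h1)

theorem isCompact_sublevel {n m : ℕ}
    {f : (Fin n → ℝ) → (Fin m → ℝ) → Fin n → ℝ}
    {ℓ : (Fin n → ℝ) → (Fin m → ℝ) → ℝ≥0}
    (hf : Continuous fun p : (Fin n → ℝ) × (Fin m → ℝ) => f p.1 p.2)
    (hl : Continuous fun p : (Fin n → ℝ) × (Fin m → ℝ) => ℓ p.1 p.2)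
    (hlb : ∀ (x : Fin n → ℝ) (a : ℝ), ∃ S ∈ 𝓝 x, ∃ B : Set (Fin m → ℝ),
      Bornology.IsBounded B ∧ ∀ z ∈ S, {u : Fin m → ℝ | (ℓ z u : ℝ) ≤ a} ⊆ B)
    {Uset : (Fin n → ℝ) → Set (Fin m → ℝ)}
    (hUgraph : IsClosed {p : (Fin n → ℝ) × (Fin m → ℝ) | p.2 ∈ Uset p.1})
    {V : (Fin n → ℝ) → ℝ≥0} (hV : LowerSemicontinuous V) (x : Fin n → ℝ) (a : ℝ≥0) :
    IsCompact {u ∈ Uset x | ℓ x u + V (f x u) ≤ a} := by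
  obtain ⟨S, hS, B, hB, hSB⟩ := hlb x a
  refine Metric.isCompact_of_isClosed_isBounded ?_ (hB.subset ?_)
  · have hU : IsClosed (Uset x) := hUgraph.preimage (Continuous.prodMk_right x)
    exact hU.inter ((lowerSemicontinuous_cost hf hl hV x).isClosed_preimage a)
  · rintro u ⟨-, hu⟩
    exact hSB x (mem_of_mem_nhds hS)
      (NNReal.coe_le_coe.2 (le_self_add.trans hu))

/-- the set of minimizers of `u ↦ ℓ(x,u) + V(f(x,u))` over `U(x)`
is nonempty and compact, and (under the additional value bound) the resulting
set-valued map is locally bounded. -/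
theorem argmin_nonempty_compact_locally_bounded
    (f : (Fin n → ℝ) → (Fin m → ℝ) → Fin n → ℝ)
    (ℓ : (Fin n → ℝ) → (Fin m → ℝ) → ℝ≥0)
    (hf : Continuous fun p : (Fin n → ℝ) × (Fin m → ℝ) => f p.1 p.2)
    (hl : Continuous fun p : (Fin n → ℝ) × (Fin m → ℝ) => ℓ p.1 p.2)
    -- `ℓ` level-bounded in `u`, locally uniformly in `x`
    (hlb : ∀ (x : Fin n → ℝ) (a : ℝ), ∃ S ∈ 𝓝 x, ∃ B : Set (Fin m → ℝ),
      Bornology.IsBounded B ∧ ∀ z ∈ S, {u : Fin m → ℝ | (ℓ z u : ℝ) ≤ a} ⊆ B)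
    (Uset : (Fin n → ℝ) → Set (Fin m → ℝ))
    (hUne : ∀ x, (Uset x).Nonempty)
    (hUgraph : IsClosed {p : (Fin n → ℝ) × (Fin m → ℝ) | p.2 ∈ Uset p.1})
    (V : (Fin n → ℝ) → ℝ≥0) (hV : LowerSemicontinuous V) :
    -- `H x` : minimizers of `u ↦ ℓ(x,u) + V(f(x,u))` over `U(x)`
    let H : (Fin n → ℝ) → Set (Fin m → ℝ) := fun x =>
      {u ∈ Uset x | ∀ u' ∈ Uset x, ℓ x u + V (f x u) ≤ ℓ x u' + V (f x u')}
    -- (a) nonempty and compact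
    (∀ x, (H x).Nonempty ∧ IsCompact (H x)) ∧
    -- (b) local boundedness under the value bound
    (∀ (σ : (Fin n → ℝ) → ℝ≥0) (alphaV : ℝ≥0 → ℝ≥0),
      Continuous σ → ClassKInf alphaV →
      (∀ x, ⨅ u ∈ Uset x, ((ℓ x u + V (f x u) : ℝ≥0) : ℝ≥0∞)
          ≤ (alphaV (σ x) : ℝ≥0∞)) →
      ∀ x, ∃ S ∈ 𝓝 x, Bornology.IsBounded (⋃ z ∈ S, H z)) := by
  intro H
  have hcpt := isCompact_sublevel hf hl hlb hUgraph hV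
  refine ⟨fun x => ?_, ?_⟩
  · obtain ⟨u₀, hu₀⟩ := hUne x
    obtain ⟨v, ⟨hvU, hv⟩, hmin⟩ :=
      LowerSemicontinuousOn.exists_isMinOn
        (s := {u ∈ Uset x | ℓ x u + V (f x u) ≤ ℓ x u₀ + V (f x u₀)})
        ⟨u₀, hu₀, le_rfl⟩ (hcpt x _)
        ((lowerSemicontinuous_cost hf hl hV x).lowerSemicontinuousOn _)
    -- A minimizer over the sublevel set at `u₀` is a minimizer over all of `U(x)`.
    have hvmin : ∀ u ∈ Uset x, ℓ x v + V (f x v) ≤ ℓ x u + V (f x u) := by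
      intro u hu
      rcases le_total (ℓ x u + V (f x u)) (ℓ x u₀ + V (f x u₀)) with h | h
      · exact hmin ⟨hu, h⟩
      · exact hv.trans h
    have hH : H x = {u ∈ Uset x | ℓ x u + V (f x u) ≤ ℓ x v + V (f x v)} := by
      ext u
      exact ⟨fun h => ⟨h.1, h.2 v hvU⟩, fun h => ⟨h.1, fun w hw => h.2.trans (hvmin w hw)⟩⟩
    exact ⟨⟨v, hvU, hvmin⟩, hH ▸ hcpt x _⟩
  · intro σ alphaV hσ hα hbound x
    obtain ⟨S, hS, B, hB, hSB⟩ := hlb x ((alphaV (σ x) + 1 : ℝ≥0) : ℝ)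
    have hT : ∀ᶠ z in 𝓝 x, alphaV (σ z) < alphaV (σ x) + 1 :=
      (hα.1.comp hσ).continuousAt.eventually_lt continuousAt_const
        (lt_add_of_pos_right _ one_pos)
    refine ⟨S ∩ {z | alphaV (σ z) < alphaV (σ x) + 1}, Filter.inter_mem hS hT, hB.subset ?_⟩
    refine Set.iUnion₂_subset fun z hz u hu => hSB z hz.1 ?_
    have h1 : ((ℓ z u + V (f z u) : ℝ≥0) : ℝ≥0∞) ≤ (alphaV (σ z) : ℝ≥0∞) :=
      (le_iInf₂ fun w hw => ENNReal.coe_le_coe.2 (hu.2 w hw)).trans (hbound z)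
    have h2 : ℓ z u + V (f z u) ≤ alphaV (σ z) := ENNReal.coe_le_coe.1 h1
    exact NNReal.coe_le_coe.2 (le_self_add.trans (h2.trans hz.2.le))

end
end

section
/- Let α : [0,∞) → [0,∞) be continuous with α(0) = 0 and α(s) < s for every s > 0, and define β̃(s,k) := max_{ŝ ∈ [0,s]} α^{(k)}(ŝ) for s ≥ 0 and k ∈ ℕ. Then β̃ is of class KL: for each fixed k, s ↦ β̃(s,k) is continuous, nondecreasing, and β̃(0,k) = 0; and for each fixed s, k ↦ β̃(s,k) is nonincreasing and β̃(s,k) → 0 as k → ∞. -/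
/-!
Write `M s k` for `sSup (α^[k] '' Set.Icc 0 s)`. Each iterate is continuous and `[0, s]` is compact,
so the supremum is an attained maximum. Rescaling `[0, s]` to `[0, 1]` turns it into the maximum of
a jointly continuous function over a fixed compact set, whence continuity in `s`
(`continuous_sSup_image_Icc`). Since `α t ≤ t`, the iterates decrease pointwise in `k`.

For the limit, `M s (k + 1) ≤ γ (M s k)` with `γ r = M r 1 = max_{[0, r]} α`. The sequence `M s k`
decreases to some `c`, and continuity of `γ` gives `c ≤ γ c`. Since the maximum is attained and
`α t < t` for `t > 0`, this forces `c = 0`.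
-/

open scoped NNReal Topology

noncomputable section

theorem bddAbove_image_Icc {f : ℝ≥0 → ℝ≥0} (hf : Continuous f) (s : ℝ≥0) :
    BddAbove (f '' Set.Icc 0 s) :=
  (isCompact_Icc.image hf).bddAbove

theorem le_sSup_image_Icc {f : ℝ≥0 → ℝ≥0} (hf : Continuous f) {s t : ℝ≥0} (ht : t ≤ s) :
    f t ≤ sSup (f '' Set.Icc 0 s) :=
  le_csSup (bddAbove_image_Icc hf s) ⟨t, ⟨zero_le, ht⟩, rfl⟩

theorem sSup_image_Icc_le {f : ℝ≥0 → ℝ≥0} {s b : ℝ≥0} (h : ∀ t ≤ s, f t ≤ b) :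
    sSup (f '' Set.Icc 0 s) ≤ b := by
  refine csSup_le ((Set.nonempty_Icc.2 zero_le).image f) ?_
  rintro _ ⟨t, ht, rfl⟩
  exact h t ht.2

theorem exists_eq_sSup_image_Icc {f : ℝ≥0 → ℝ≥0} (hf : Continuous f) (s : ℝ≥0) :
    ∃ t ≤ s, f t = sSup (f '' Set.Icc 0 s) := by
  obtain ⟨t, ht, h⟩ := (isCompact_Icc.image hf).sSup_mem
    ((Set.nonempty_Icc.2 (zero_le : (0 : ℝ≥0) ≤ s)).image f)
  exact ⟨t, ht.2, h⟩

theorem continuous_sSup_image_Icc {f : ℝ≥0 → ℝ≥0} (hf : Continuous f) :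
    Continuous fun s : ℝ≥0 => sSup (f '' Set.Icc 0 s) := by
  have hscale : ∀ s : ℝ≥0, sSup (f '' Set.Icc 0 s) =
      sSup ((fun u => f (u * s)) '' Set.Icc (0 : ℝ≥0) 1) := by
    intro s
    have hg : Continuous fun u : ℝ≥0 => f (u * s) := by fun_prop
    refine le_antisymm (sSup_image_Icc_le fun t ht => ?_) (sSup_image_Icc_le fun u hu => ?_)
    · rcases eq_or_ne s 0 with rfl | hs
      · simp [le_antisymm ht zero_le]
      · have := le_sSup_image_Icc hg (div_le_one_of_le₀ ht zero_le)
        simpa only [div_mul_cancel₀ t hs] using this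
    · exact le_sSup_image_Icc hf (mul_le_of_le_one_left zero_le hu)
  simp only [hscale]
  refine isCompact_Icc.continuous_sSup (f := fun s u : ℝ≥0 => f (u * s)) ?_
  exact hf.comp (continuous_snd.mul continuous_fst)

/-- if moreover `α(s) < s` for `s > 0`, then
`β̃(s,k) = max_{ŝ ∈ [0,s]} α^{(k)}(ŝ)` is of class KL: continuous,
nondecreasing and zero at zero in `s` for each `k`; nonincreasing in `k`
and tending to `0` as `k → ∞` for each `s`. -/
theorem iterated_max_is_KL
    (α : ℝ≥0 → ℝ≥0) (hcont : Continuous α) (h0 : α 0 = 0)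
    (hlt : ∀ s : ℝ≥0, 0 < s → α s < s) :
    (∀ k : ℕ, Continuous fun s : ℝ≥0 => sSup (α^[k] '' Set.Icc 0 s)) ∧
    (∀ k : ℕ, Monotone fun s : ℝ≥0 => sSup (α^[k] '' Set.Icc 0 s)) ∧
    (∀ k : ℕ, sSup (α^[k] '' Set.Icc 0 0) = 0) ∧
    (∀ s : ℝ≥0, Antitone fun k : ℕ => sSup (α^[k] '' Set.Icc 0 s)) ∧
    (∀ s : ℝ≥0, Filter.Tendsto (fun k : ℕ => sSup (α^[k] '' Set.Icc 0 s))
      Filter.atTop (nhds 0)) := by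
  have hk : ∀ k : ℕ, Continuous α^[k] := hcont.iterate
  have hle : ∀ t, α t ≤ t := by
    intro t
    rcases eq_or_ne t 0 with rfl | ht
    · exact h0.le
    · exact (hlt t (pos_iff_ne_zero.2 ht)).le
  have hanti : ∀ s : ℝ≥0, Antitone fun k : ℕ => sSup (α^[k] '' Set.Icc 0 s) := by
    intro s
    refine antitone_nat_of_succ_le fun k => sSup_image_Icc_le fun t ht => ?_
    rw [Function.iterate_succ_apply']
    exact (hle _).trans (le_sSup_image_Icc (hk k) ht)
  refine ⟨fun k => continuous_sSup_image_Icc (hk k), fun k s s' hs => ?_, fun k => ?_, hanti,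
    fun s => ?_⟩
  · exact sSup_image_Icc_le fun t ht => le_sSup_image_Icc (hk k) (ht.trans hs)
  · simp [Function.iterate_fixed h0]
  · have hlim := tendsto_atTop_ciInf (hanti s) (OrderBot.bddBelow _)
    set c := ⨅ k : ℕ, sSup (α^[k] '' Set.Icc 0 s)
    have hcγ : c ≤ sSup (α '' Set.Icc 0 c) := by
      refine le_of_tendsto_of_tendsto' (hlim.comp (Filter.tendsto_add_atTop_nat 1))
        (((continuous_sSup_image_Icc hcont).tendsto c).comp hlim) fun k => ?_
      refine sSup_image_Icc_le fun t ht => ?_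
      rw [Function.iterate_succ_apply']
      exact le_sSup_image_Icc hcont (le_sSup_image_Icc (hk k) ht)
    obtain ⟨t, htc, ht⟩ := exists_eq_sSup_image_Icc hcont c
    rw [← ht] at hcγ
    -- The maximizer satisfies `t ≤ c ≤ α t`, so it cannot be positive.
    have ht0 : t = 0 := by
      by_contra hne
      exact (hlt t (pos_iff_ne_zero.2 hne)).not_ge (htc.trans hcγ)
    have hc : c = 0 := by
      rw [ht0, h0] at hcγ
      exact le_antisymm hcγ zero_le
    rwa [hc] at hlim

end
end
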